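/- arXiv:2306.11497 — 2 statements merged into one kernel-verified Lean document; each statement's English description precedes it below -/
import Mathlib

section
/- Suppose ν₁, ν₂ are probability measures on ℝ^d with finite second moments, L is μ-strongly convex and L-smooth, gradient noise is conditionally centered, and the noise distributions satisfy W₂²(D(ε(θ)), D(ε(θ'))) ≤ L_W ‖θ−θ'‖². Then for step size β ≤ 2/(μ+L), the SGD transition kernel P_β satisfies W₂²(ν₁P_β, ν₂P_β) ≤ ((1−βμ)² + β²L_W)·W₂²(ν₁, ν₂). -/
open MeasureTheory Real
open scoped RealInnerProductSpace

/-- Squared Wasserstein-2 distance, as the infimum of `E‖X−Y‖²` over couplings. -/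
noncomputable def W2sq {d : ℕ} (μ ν : Measure (EuclideanSpace ℝ (Fin d))) : ℝ :=
  sInf {r | ∃ ξ : Measure (EuclideanSpace ℝ (Fin d) × EuclideanSpace ℝ (Fin d)),
    IsProbabilityMeasure ξ ∧ ξ.map Prod.fst = μ ∧ ξ.map Prod.snd = ν ∧
    r = ∫ p, ‖p.1 - p.2‖ ^ 2 ∂ξ}

/-- One step of the SGD Markov kernel: from `x`, draw noise `e ∼ η x` and move to
`x − β (∇L x + e)`. -/
noncomputable def sgdStep {d : ℕ} (β : ℝ)
    (g : EuclideanSpace ℝ (Fin d) → EuclideanSpace ℝ (Fin d))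
    (η : EuclideanSpace ℝ (Fin d) → Measure (EuclideanSpace ℝ (Fin d)))
    (ν : Measure (EuclideanSpace ℝ (Fin d))) : Measure (EuclideanSpace ℝ (Fin d)) :=
  ν.bind (fun x => (η x).map (fun e => x - β • (g x + e)))

/-!
The gradient step contracts because `∇L - mu • id` is the gradient of a convex, `(Lc - mu)`-smooth
function, hence cocoercive. Adding noise to two points `u`, `v` along a coupling of the two centred
noise laws creates no cross term, so the laws of the next iterates satisfy
`W₂² ≤ ‖u - v‖² + β² W₂²(η x, η y)`.

It remains to average these couplings over a coupling of `ν₁` and `ν₂`, which is done without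
choosing them measurably. For a coercive cost, the set of moment vectors of probability measures
of bounded cost is closed, by Prokhorov's theorem, and convex, so it contains the average of the
moment vectors of the individual couplings; applied to test functions of one coordinate, this
yields a coupling of the averaged marginals. The squared distance is made coercive by adding
`δ (‖x‖² + ‖y‖²)`, and then `δ → 0`.
-/

open Filter Topology ProbabilityTheory
open scoped BoundedContinuousFunction

section GradientStep

variable {E : Type*} [NormedAddCommGroup E] [InnerProductSpace ℝ E]

theorem inner_gradient_sub_nonneg {f : E → ℝ} {g : E → E}
    (hconvex : ∀ x y, 0 ≤ f x - f y - ⟪g y, x - y⟫) (x y : E) : 0 ≤ ⟪g x - g y, x - y⟫ := by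
  have hyx := hconvex y x
  rw [← neg_sub x y, inner_neg_right] at hyx
  rw [inner_sub_left]
  linarith [hconvex x y]

theorem mul_norm_gradient_sub_sq_le {f : E → ℝ} {g : E → E} {M : ℝ}
    (hconvex : ∀ x y, 0 ≤ f x - f y - ⟪g y, x - y⟫)
    (hsmooth : ∀ x y, f x - f y - ⟪g y, x - y⟫ ≤ M / 2 * ‖x - y‖ ^ 2) (x y : E) (s : ℝ) :
    (s - M / 2 * s ^ 2) * ‖g x - g y‖ ^ 2 ≤ f x - f y - ⟪g y, x - y⟫ := by
  set D := g x - g y with hD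
  have hstep_smooth := hsmooth (x - s • D) x
  have hstep_convex := hconvex (x - s • D) y
  have hinner : ⟪g x, D⟫ - ⟪g y, D⟫ = ‖D‖ ^ 2 := by
    rw [← inner_sub_left, ← hD, real_inner_self_eq_norm_sq]
  rw [sub_sub_cancel_left, inner_neg_right, norm_neg, inner_smul_right, norm_smul, mul_pow,
    norm_eq_abs, sq_abs] at hstep_smooth
  rw [sub_right_comm x, inner_sub_right, inner_smul_right] at hstep_convex
  linear_combination hstep_smooth + hstep_convex - s * hinner

theorem norm_gradient_sub_sq_le_mul_inner {f : E → ℝ} {g : E → E} {M : ℝ}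
    (hconvex : ∀ x y, 0 ≤ f x - f y - ⟪g y, x - y⟫)
    (hsmooth : ∀ x y, f x - f y - ⟪g y, x - y⟫ ≤ M / 2 * ‖x - y‖ ^ 2) (x y : E) :
    ‖g x - g y‖ ^ 2 ≤ M * ⟪g x - g y, x - y⟫ := by
  have hquadratic (s : ℝ) :
      0 ≤ M * ‖g x - g y‖ ^ 2 * (s * s) + -2 * ‖g x - g y‖ ^ 2 * s + ⟪g x - g y, x - y⟫ := by
    have hxy := mul_norm_gradient_sub_sq_le hconvex hsmooth x y s
    have hyx := mul_norm_gradient_sub_sq_le hconvex hsmooth y x s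
    rw [norm_sub_rev, ← neg_sub x y, inner_neg_right] at hyx
    rw [inner_sub_left]
    linear_combination hxy + hyx
  have hdiscrim := discrim_le_zero hquadratic
  rw [discrim] at hdiscrim
  rcases (sq_nonneg ‖g x - g y‖).eq_or_lt with hzero | hpos
  · have hgradient : g x - g y = 0 := norm_eq_zero.1 (pow_eq_zero_iff two_ne_zero |>.1 hzero.symm)
    rw [← hzero, hgradient, inner_zero_left, mul_zero]
  · refine le_of_mul_le_mul_left ?_ hpos
    linear_combination hdiscrim / 4

theorem norm_gradient_step_sub_sq_le {f : E → ℝ} {g : E → E} {m M β : ℝ}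
    (hconvex : ∀ x y, m / 2 * ‖x - y‖ ^ 2 ≤ f x - f y - ⟪g y, x - y⟫)
    (hsmooth : ∀ x y, f x - f y - ⟪g y, x - y⟫ ≤ M / 2 * ‖x - y‖ ^ 2)
    (hβ₀ : 0 ≤ β) (hβ : β * (m + M) ≤ 2) (x y : E) :
    ‖(x - β • g x) - (y - β • g y)‖ ^ 2 ≤ (1 - β * m) ^ 2 * ‖x - y‖ ^ 2 := by
  let f' (x : E) : ℝ := f x - m / 2 * ‖x‖ ^ 2
  let g' (x : E) : E := g x - m • x
  have hbregman (x y : E) : f' x - f' y - ⟪g' y, x - y⟫ =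
      f x - f y - ⟪g y, x - y⟫ - m / 2 * ‖x - y‖ ^ 2 := by
    rw [norm_sub_sq_real, inner_sub_left, inner_smul_left, inner_sub_right y,
      real_inner_self_eq_norm_sq, real_inner_comm x y, conj_trivial]
    ring
  have hconvex' (x y : E) : 0 ≤ f' x - f' y - ⟪g' y, x - y⟫ := by
    linarith [hbregman x y, hconvex x y]
  have hsmooth' (x y : E) : f' x - f' y - ⟪g' y, x - y⟫ ≤ (M - m) / 2 * ‖x - y‖ ^ 2 := by
    linarith [hbregman x y, hsmooth x y]
  set w := x - y
  set D := g' x - g' y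
  have hmonotone : 0 ≤ ⟪D, w⟫ := inner_gradient_sub_nonneg hconvex' x y
  have hcocoercive : ‖D‖ ^ 2 ≤ (M - m) * ⟪D, w⟫ :=
    norm_gradient_sub_sq_le_mul_inner hconvex' hsmooth' x y
  calc ‖(x - β • g x) - (y - β • g y)‖ ^ 2
      = ‖(1 - β * m) • w - β • D‖ ^ 2 := by congr 2; simp only [w, D, g']; module
    _ = (1 - β * m) ^ 2 * ‖w‖ ^ 2 - 2 * β * (1 - β * m) * ⟪D, w⟫ + β ^ 2 * ‖D‖ ^ 2 := by
        rw [norm_sub_sq_real, norm_smul, norm_smul, mul_pow, mul_pow, norm_eq_abs, norm_eq_abs,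
          sq_abs, sq_abs, inner_smul_left, inner_smul_right, real_inner_comm, conj_trivial]
        ring
    _ ≤ (1 - β * m) ^ 2 * ‖w‖ ^ 2 := by
        have hslack := mul_nonneg (mul_nonneg hβ₀ (sub_nonneg.2 hβ)) hmonotone
        linear_combination β ^ 2 * hcocoercive + hslack

end GradientStep

section CoerciveCost

variable {Ω : Type*} [MeasurableSpace Ω]

theorem integrable_and_integral_le_iff_forall_integral_min_le {μ : Measure Ω} [IsFiniteMeasure μ]
    {c : Ω → ℝ} (hc : Measurable c) (hc₀ : 0 ≤ c) {r : ℝ} :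
    (Integrable c μ ∧ ∫ ω, c ω ∂μ ≤ r) ↔ ∀ n : ℕ, ∫ ω, min (c ω) n ∂μ ≤ r := by
  have hmin_nonneg (n : ℕ) (ω : Ω) : 0 ≤ min (c ω) n := le_min (hc₀ ω) n.cast_nonneg
  have hmin (n : ℕ) : Integrable (fun ω => min (c ω) n) μ :=
    .of_bound (hc.min measurable_const).aestronglyMeasurable n <| .of_forall fun ω => by
      rw [norm_of_nonneg (hmin_nonneg n ω)]
      exact min_le_right _ _
  refine ⟨fun ⟨hint, hle⟩ n => ?_, fun h => ?_⟩
  · exact (integral_mono (hmin n) hint fun ω => min_le_left _ _).trans hle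
  have hr : 0 ≤ r := (integral_nonneg (hmin_nonneg 0)).trans (h 0)
  have hlintegral : ∫⁻ ω, ENNReal.ofReal (c ω) ∂μ ≤ ENNReal.ofReal r := by
    have htendsto : Tendsto (fun n : ℕ => ∫⁻ ω, ENNReal.ofReal (min (c ω) n) ∂μ) atTop
        (𝓝 (∫⁻ ω, ENNReal.ofReal (c ω) ∂μ)) := by
      refine lintegral_tendsto_of_tendsto_of_monotone
        (fun n => (hc.min measurable_const).ennreal_ofReal.aemeasurable)
        (.of_forall fun ω n k hnk => ?_) (.of_forall fun ω => ?_)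
      · exact ENNReal.ofReal_le_ofReal (min_le_min_left _ (Nat.cast_le.2 hnk))
      · refine tendsto_const_nhds.congr' ?_
        filter_upwards [tendsto_natCast_atTop_atTop.eventually_ge_atTop (c ω)] with n hn
        rw [min_eq_left hn]
    refine le_of_tendsto' htendsto fun n => ?_
    rw [← ofReal_integral_eq_lintegral_ofReal (hmin n) (.of_forall (hmin_nonneg n))]
    exact ENNReal.ofReal_le_ofReal (h n)
  have hint : Integrable c μ :=
    (lintegral_ofReal_ne_top_iff_integrable hc.aestronglyMeasurable (.of_forall hc₀)).1
      (hlintegral.trans_lt ENNReal.ofReal_lt_top).ne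
  rw [← ofReal_integral_eq_lintegral_ofReal hint (.of_forall hc₀)] at hlintegral
  exact ⟨hint, (ENNReal.ofReal_le_ofReal_iff hr).1 hlintegral⟩

variable [TopologicalSpace Ω]

theorem isClosed_setOf_integral_le [OpensMeasurableSpace Ω] {c : Ω → ℝ} (hc : Continuous c)
    (hc₀ : 0 ≤ c) (r : ℝ) :
    IsClosed {γ : ProbabilityMeasure Ω | Integrable c γ ∧ ∫ ω, c ω ∂γ ≤ r} := by
  simp only [integrable_and_integral_le_iff_forall_integral_min_le hc.measurable hc₀,
    Set.ofPred_forall]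
  refine isClosed_iInter fun n : ℕ => ?_
  let truncation : Ω →ᵇ ℝ := .ofNormedAddCommGroup (fun ω => min (c ω) n)
    (hc.min continuous_const) n fun ω => by
      rw [norm_of_nonneg (le_min (hc₀ ω) n.cast_nonneg)]
      exact min_le_right _ _
  exact isClosed_le (ProbabilityMeasure.continuous_integral_boundedContinuousFunction truncation)
    continuous_const

theorem isTightMeasureSet_setOf_integral_le {c : Ω → ℝ} (hc₀ : 0 ≤ c)
    (hcoercive : Tendsto c (cocompact Ω) atTop) (r : ℝ) :
    IsTightMeasureSet {μ : Measure Ω | IsFiniteMeasure μ ∧ Integrable c μ ∧ ∫ ω, c ω ∂μ ≤ r} := by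
  rw [isTightMeasureSet_iff_exists_isCompact_measure_compl_le]
  intro ε hε
  have hsmall : ∀ᶠ R : ℝ in atTop, ENNReal.ofReal (r / R) < ε := by
    have htendsto : Tendsto (fun R : ℝ => ENNReal.ofReal (r / R)) atTop (𝓝 0) := by
      simpa using ENNReal.tendsto_ofReal (tendsto_const_nhds.div_atTop tendsto_id)
    exact htendsto.eventually_lt_const hε
  obtain ⟨R, hR, hRpos⟩ := (hsmall.and (eventually_gt_atTop 0)).exists
  obtain ⟨K, hK, hKc⟩ := mem_cocompact.1 (hcoercive.eventually_ge_atTop R)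
  refine ⟨K, hK, fun μ ⟨_, hint, hle⟩ => ?_⟩
  have hmarkov : R * μ.real {ω | R ≤ c ω} ≤ r :=
    (mul_meas_ge_le_integral_of_nonneg (.of_forall hc₀) hint R).trans hle
  calc μ Kᶜ ≤ μ {ω | R ≤ c ω} := measure_mono hKc
    _ = ENNReal.ofReal (μ.real {ω | R ≤ c ω}) := (ofReal_measureReal).symm
    _ ≤ ENNReal.ofReal (r / R) :=
        ENNReal.ofReal_le_ofReal ((le_div_iff₀' hRpos).2 hmarkov)
    _ ≤ ε := hR.le

theorem isCompact_setOf_integral_le [T2Space Ω] [BorelSpace Ω] {c : Ω → ℝ} (hc : Continuous c)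
    (hc₀ : 0 ≤ c) (hcoercive : Tendsto c (cocompact Ω) atTop) (r : ℝ) :
    IsCompact {γ : ProbabilityMeasure Ω | Integrable c γ ∧ ∫ ω, c ω ∂γ ≤ r} := by
  rw [← (isClosed_setOf_integral_le hc hc₀ r).closure_eq]
  refine isCompact_closure_of_isTightMeasureSet
    ((isTightMeasureSet_setOf_integral_le hc₀ hcoercive r).subset ?_)
  rintro _ ⟨γ, hγ, rfl⟩
  exact ⟨inferInstance, hγ⟩

end CoerciveCost

/-- The pairs of a family of moments `∫ h i ∂γ` and an upper bound on the cost `∫ c ∂γ` that are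
realised by some probability measure `γ`. Only an upper bound on the cost is recorded because the
cost is merely lower semicontinuous under weak limits, and the set is wanted closed. -/
def momentSet {Ω ι : Type*} [MeasurableSpace Ω] [TopologicalSpace Ω] (h : ι → Ω →ᵇ ℝ)
    (c : Ω → ℝ) : Set ((ι → ℝ) × ℝ) :=
  {v | ∃ γ : ProbabilityMeasure Ω,
    (∀ i, ∫ ω, h i ω ∂γ = v.1 i) ∧ Integrable c γ ∧ ∫ ω, c ω ∂γ ≤ v.2}

section MomentSet

variable {Ω ι Z : Type*} [MeasurableSpace Ω] [TopologicalSpace Ω] {h : ι → Ω →ᵇ ℝ} {c : Ω → ℝ}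

theorem convex_momentSet [OpensMeasurableSpace Ω] : Convex ℝ (momentSet h c) := by
  rintro v ⟨γ, hγ, hγ_int, hγ_le⟩ w ⟨ρ, hρ, hρ_int, hρ_le⟩ s t hs ht hst
  let mix : Measure Ω := ENNReal.ofReal s • (γ : Measure Ω) + ENNReal.ofReal t • (ρ : Measure Ω)
  have hmix : IsProbabilityMeasure mix :=
    ⟨by simp [mix, ← ENNReal.ofReal_add hs ht, hst]⟩
  have integrable_mix {f : Ω → ℝ} (hf : Integrable f γ) (hf' : Integrable f ρ) :
      Integrable f mix :=
    (hf.smul_measure ENNReal.ofReal_ne_top).add_measure (hf'.smul_measure ENNReal.ofReal_ne_top)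
  have integral_mix {f : Ω → ℝ} (hf : Integrable f γ) (hf' : Integrable f ρ) :
      ∫ ω, f ω ∂mix = s * ∫ ω, f ω ∂γ + t * ∫ ω, f ω ∂ρ := by
    rw [integral_add_measure (hf.smul_measure ENNReal.ofReal_ne_top)
      (hf'.smul_measure ENNReal.ofReal_ne_top), integral_smul_measure, integral_smul_measure,
      ENNReal.toReal_ofReal hs, ENNReal.toReal_ofReal ht, smul_eq_mul, smul_eq_mul]
  refine ⟨⟨mix, hmix⟩, fun i => ?_, integrable_mix hγ_int hρ_int, ?_⟩
  · exact (integral_mix ((h i).integrable _) ((h i).integrable _)).trans (by rw [hγ, hρ]; rfl)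
  · refine (integral_mix hγ_int hρ_int).trans_le ?_
    exact add_le_add (mul_le_mul_of_nonneg_left hγ_le hs) (mul_le_mul_of_nonneg_left hρ_le ht)

variable [T2Space Ω] [BorelSpace Ω]

theorem isClosed_momentSet (hc : Continuous c) (hc₀ : 0 ≤ c)
    (hcoercive : Tendsto c (cocompact Ω) atTop) : IsClosed (momentSet h c) := by
  refine isClosed_of_closure_subset fun v hv => ?_
  obtain ⟨u, hu, huv⟩ := mem_closure_iff_ultrafilter.1 hv
  obtain ⟨_, γ₀, -⟩ := closure_nonempty_iff.1 ⟨v, hv⟩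
  have : Nonempty (ProbabilityMeasure Ω) := ⟨γ₀⟩
  choose! γ hmoments hint hle using fun (w : (ι → ℝ) × ℝ) (hw : w ∈ momentSet h c) => hw
  have hbounded {R : ℝ} (hR : v.2 < R) :
      ∀ᶠ w in u, γ w ∈ {γ : ProbabilityMeasure Ω | Integrable c γ ∧ ∫ ω, c ω ∂γ ≤ R} := by
    filter_upwards [hu, huv (continuous_snd.continuousAt.eventually_lt_const hR)] with w hw hwR
    exact ⟨hint w hw, (hle w hw).trans hwR.le⟩
  obtain ⟨γ', -, hγ'⟩ :=
    (isCompact_setOf_integral_le hc hc₀ hcoercive (v.2 + 1)).ultrafilter_le_nhds'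
      (u.map γ) (hbounded (lt_add_one v.2))
  have hcost {R : ℝ} (hR : v.2 < R) : Integrable c γ' ∧ ∫ ω, c ω ∂γ' ≤ R :=
    (isClosed_setOf_integral_le hc hc₀ R).mem_of_tendsto hγ' (hbounded hR)
  refine ⟨γ', fun i => ?_, (hcost (lt_add_one v.2)).1,
    le_of_forall_gt_imp_ge_of_dense fun R hR => (hcost hR).2⟩
  have hlim : Tendsto (fun w => ∫ ω, h i ω ∂(γ w)) u (𝓝 (∫ ω, h i ω ∂γ')) :=
    ((ProbabilityMeasure.continuous_integral_boundedContinuousFunction (h i)).tendsto γ').comp hγ'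
  have hlim' : Tendsto (fun w : (ι → ℝ) × ℝ => w.1 i) u (𝓝 (v.1 i)) :=
    (((continuous_apply i).comp continuous_fst).tendsto v).mono_left huv
  refine tendsto_nhds_unique hlim (hlim'.congr' ?_)
  filter_upwards [hu] with w hw using (hmoments w hw i).symm

variable [MeasurableSpace Z] {ξ : Measure Z} [IsProbabilityMeasure ξ]

theorem integral_mem_momentSet_of_finite [Finite ι] (hc : Continuous c) (hc₀ : 0 ≤ c)
    (hcoercive : Tendsto c (cocompact Ω) atTop) {a : ι → Z → ℝ} {b : Z → ℝ}
    (ha : ∀ i, Integrable (a i) ξ) (hb : Integrable b ξ)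
    (hmem : ∀ᵐ z ∂ξ, (fun i => a i z, b z) ∈ momentSet h c) :
    (fun i => ∫ z, a i z ∂ξ, ∫ z, b z ∂ξ) ∈ momentSet h c := by
  have := Fintype.ofFinite ι
  have ha' : Integrable (fun z i => a i z) ξ := Integrable.of_eval ha
  have hmean := convex_momentSet.integral_mem (isClosed_momentSet hc hc₀ hcoercive) hmem
    (ha'.prodMk hb)
  rw [integral_pair ha' hb] at hmean
  convert hmean using 2
  ext i
  exact (eval_integral ha i).symm

theorem integral_mem_momentSet (hc : Continuous c) (hc₀ : 0 ≤ c)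
    (hcoercive : Tendsto c (cocompact Ω) atTop) {a : ι → Z → ℝ} {b : Z → ℝ}
    (ha : ∀ i, Integrable (a i) ξ) (hb : Integrable b ξ)
    (hmem : ∀ᵐ z ∂ξ, (fun i => a i z, b z) ∈ momentSet h c) :
    (fun i => ∫ z, a i z ∂ξ, ∫ z, b z ∂ξ) ∈ momentSet h c := by
  have hclosed (i : ι) :
      IsClosed {γ : ProbabilityMeasure Ω | ∫ ω, h i ω ∂γ = ∫ z, a i z ∂ξ} :=
    isClosed_eq (ProbabilityMeasure.continuous_integral_boundedContinuousFunction (h i))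
      continuous_const
  obtain ⟨γ, hcost, hmoments⟩ :=
    (isCompact_setOf_integral_le hc hc₀ hcoercive (∫ z, b z ∂ξ)).inter_iInter_nonempty _ hclosed
      fun s => by
        obtain ⟨γ, hmoments, hcost⟩ := integral_mem_momentSet_of_finite
          (h := fun i : s => h i) hc hc₀ hcoercive (fun i => ha i) hb <| by
            filter_upwards [hmem] with z ⟨γ, hmoments, hcost⟩
            exact ⟨γ, fun i => hmoments i, hcost⟩
        exact ⟨γ, hcost, Set.mem_iInter₂.2 fun i hi => hmoments ⟨i, hi⟩⟩
  exact ⟨γ, Set.mem_iInter.1 hmoments, hcost⟩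

end MomentSet

section Bind

variable {Z X E : Type*} [MeasurableSpace Z] [MeasurableSpace X] [NormedAddCommGroup E]
  {ξ : Measure Z} {P : Z → Measure X} {f : X → E}

theorem aemeasurable_of_bind_ne_zero (h : ξ.bind P ≠ 0) : AEMeasurable P ξ := by
  by_contra hP
  rw [Measure.bind, Measure.map_of_not_aemeasurable hP, Measure.join_zero] at h
  exact h rfl

theorem exists_kernel_ae_eq_of_aemeasurable (hP : AEMeasurable P ξ) :
    ∃ κ : Kernel Z X, P =ᵐ[ξ] κ ∧ ξ.bind P = κ ∘ₘ ξ :=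
  ⟨⟨hP.mk P, hP.measurable_mk⟩, hP.ae_eq_mk, Measure.bind_congr_right hP.ae_eq_mk⟩

theorem ae_integrable_of_integrable_bind (hP : AEMeasurable P ξ) (hf : Integrable f (ξ.bind P)) :
    ∀ᵐ z ∂ξ, Integrable f (P z) := by
  obtain ⟨κ, hκ, hbind⟩ := exists_kernel_ae_eq_of_aemeasurable hP
  rw [hbind] at hf
  filter_upwards [hκ, Measure.ae_integrable_of_integrable_comp hf] with z hz hfz
  rwa [hz]

theorem integrable_integral_of_integrable_bind [NormedSpace ℝ E] (hP : AEMeasurable P ξ)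
    (hf : Integrable f (ξ.bind P)) : Integrable (fun z => ∫ x, f x ∂P z) ξ := by
  obtain ⟨κ, hκ, hbind⟩ := exists_kernel_ae_eq_of_aemeasurable hP
  rw [hbind, Measure.comp_eq_comp_const_apply] at hf
  refine Integrable.congr hf.integral_comp ?_
  filter_upwards [hκ] with z hz
  rw [hz]

theorem integral_bind_eq_integral_integral [NormedSpace ℝ E] (hP : AEMeasurable P ξ)
    (hf : Integrable f (ξ.bind P)) : ∫ x, f x ∂(ξ.bind P) = ∫ z, ∫ x, f x ∂P z ∂ξ := by
  obtain ⟨κ, hκ, hbind⟩ := exists_kernel_ae_eq_of_aemeasurable hP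
  rw [hbind, Measure.comp_eq_comp_const_apply] at hf ⊢
  rw [Kernel.integral_comp hf]
  refine integral_congr_ae ?_
  filter_upwards [hκ] with z hz
  rw [hz]

end Bind

/-- `γ` is a coupling of `μ` and `ν`: a probability measure on the product space whose marginals
are `μ` and `ν`. These are the competitors in the infimum `W2sq`. -/
structure IsCoupling {X Y : Type*} [MeasurableSpace X] [MeasurableSpace Y]
    (γ : Measure (X × Y)) (μ : Measure X) (ν : Measure Y) : Prop where
  isProbabilityMeasure : IsProbabilityMeasure γ
  map_fst : γ.map Prod.fst = μ
  map_snd : γ.map Prod.snd = ν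

namespace IsCoupling

variable {X Y Z F : Type*} [MeasurableSpace X] [MeasurableSpace Y] [MeasurableSpace Z]
  [NormedAddCommGroup F]
  {γ : Measure (X × Y)} {μ : Measure X} {ν : Measure Y}

theorem prod [IsProbabilityMeasure μ] [IsProbabilityMeasure ν] : IsCoupling (μ.prod ν) μ ν :=
  ⟨inferInstance, Measure.map_fst_prod.trans (by simp), Measure.map_snd_prod.trans (by simp)⟩

theorem isProbabilityMeasure_left (hγ : IsCoupling γ μ ν) : IsProbabilityMeasure μ := by
  have := hγ.isProbabilityMeasure
  exact hγ.map_fst ▸ Measure.isProbabilityMeasure_map measurable_fst.aemeasurable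

theorem isProbabilityMeasure_right (hγ : IsCoupling γ μ ν) : IsProbabilityMeasure ν := by
  have := hγ.isProbabilityMeasure
  exact hγ.map_snd ▸ Measure.isProbabilityMeasure_map measurable_snd.aemeasurable

theorem measurePreserving_fst (hγ : IsCoupling γ μ ν) : MeasurePreserving Prod.fst γ μ :=
  ⟨measurable_fst, hγ.map_fst⟩

theorem measurePreserving_snd (hγ : IsCoupling γ μ ν) : MeasurePreserving Prod.snd γ ν :=
  ⟨measurable_snd, hγ.map_snd⟩

theorem integral_fst [NormedSpace ℝ F] (hγ : IsCoupling γ μ ν) {f : X → F}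
    (hf : AEStronglyMeasurable f μ) : ∫ p, f p.1 ∂γ = ∫ x, f x ∂μ := by
  obtain ⟨-, rfl, -⟩ := hγ
  exact (integral_map measurable_fst.aemeasurable hf).symm

theorem integral_snd [NormedSpace ℝ F] (hγ : IsCoupling γ μ ν) {f : Y → F}
    (hf : AEStronglyMeasurable f ν) : ∫ p, f p.2 ∂γ = ∫ y, f y ∂ν := by
  obtain ⟨-, -, rfl⟩ := hγ
  exact (integral_map measurable_snd.aemeasurable hf).symm

theorem map (hγ : IsCoupling γ μ ν) {X' Y' : Type*} [MeasurableSpace X'] [MeasurableSpace Y']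
    {f : X → X'} {g : Y → Y'} (hf : Measurable f) (hg : Measurable g) :
    IsCoupling (γ.map (Prod.map f g)) (μ.map f) (ν.map g) := by
  obtain ⟨hprob, rfl, rfl⟩ := hγ
  refine ⟨Measure.isProbabilityMeasure_map (hf.prodMap hg).aemeasurable, ?_, ?_⟩
  · rw [Measure.map_map measurable_fst (hf.prodMap hg), Measure.map_map hf measurable_fst,
      Prod.map_fst']
  · rw [Measure.map_map measurable_snd (hf.prodMap hg), Measure.map_map hg measurable_snd,
      Prod.map_snd']

theorem bind_fst (hγ : IsCoupling γ μ ν) {P : X → Measure Z} (hP : AEMeasurable P μ) :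
    γ.bind (fun p => P p.1) = μ.bind P := by
  obtain ⟨-, rfl, -⟩ := hγ
  exact congrArg Measure.join (hP.map_map_of_aemeasurable measurable_fst.aemeasurable).symm

theorem bind_snd (hγ : IsCoupling γ μ ν) {P : Y → Measure Z} (hP : AEMeasurable P ν) :
    γ.bind (fun p => P p.2) = ν.bind P := by
  obtain ⟨-, -, rfl⟩ := hγ
  exact congrArg Measure.join (hP.map_map_of_aemeasurable measurable_snd.aemeasurable).symm

end IsCoupling

section BindCoupling

variable {X Y Z : Type*} [TopologicalSpace X] [TopologicalSpace Y]
  [MeasurableSpace X] [MeasurableSpace Y] [BorelSpace X] [BorelSpace Y]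
  [HasOuterApproxClosed X] [HasOuterApproxClosed Y]

theorem isCoupling_of_forall_integral_eq {γ : Measure (X × Y)} [hγ : IsProbabilityMeasure γ]
    {μ : Measure X} {ν : Measure Y} [IsFiniteMeasure μ] [IsFiniteMeasure ν]
    (hμ : ∀ f : X →ᵇ ℝ, ∫ p, f p.1 ∂γ = ∫ x, f x ∂μ)
    (hν : ∀ f : Y →ᵇ ℝ, ∫ p, f p.2 ∂γ = ∫ y, f y ∂ν) : IsCoupling γ μ ν where
  isProbabilityMeasure := hγ
  map_fst := ext_of_forall_integral_eq_of_IsFiniteMeasure fun f => by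
    rw [integral_map measurable_fst.aemeasurable f.continuous.aestronglyMeasurable, hμ]
  map_snd := ext_of_forall_integral_eq_of_IsFiniteMeasure fun f => by
    rw [integral_map measurable_snd.aemeasurable f.continuous.aestronglyMeasurable, hν]

theorem exists_isCoupling_bind [T2Space X] [T2Space Y] [SecondCountableTopologyEither X Y]
    [MeasurableSpace Z] {ξ : Measure Z} [IsProbabilityMeasure ξ]
    {c : X × Y → ℝ} (hc : Continuous c) (hc₀ : 0 ≤ c)
    (hcoercive : Tendsto c (cocompact (X × Y)) atTop) {P : Z → Measure X} {Q : Z → Measure Y}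
    (hP : AEMeasurable P ξ) (hQ : AEMeasurable Q ξ) {b : Z → ℝ} (hb : Integrable b ξ)
    (hcoupling : ∀ᵐ z ∂ξ, ∃ γ, IsCoupling γ (P z) (Q z) ∧ Integrable c γ ∧ ∫ p, c p ∂γ ≤ b z) :
    ∃ γ, IsCoupling γ (ξ.bind P) (ξ.bind Q) ∧ Integrable c γ ∧ ∫ p, c p ∂γ ≤ ∫ z, b z ∂ξ := by
  have hPprob : IsProbabilityMeasure (ξ.bind P) := isProbabilityMeasure_bind hP <|
    hcoupling.mono fun _ ⟨_, hγ, _⟩ => hγ.isProbabilityMeasure_left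
  have hQprob : IsProbabilityMeasure (ξ.bind Q) := isProbabilityMeasure_bind hQ <|
    hcoupling.mono fun _ ⟨_, hγ, _⟩ => hγ.isProbabilityMeasure_right
  let h : (X →ᵇ ℝ) ⊕ (Y →ᵇ ℝ) → X × Y →ᵇ ℝ :=
    Sum.elim (·.compContinuous .fst) (·.compContinuous .snd)
  let a : (X →ᵇ ℝ) ⊕ (Y →ᵇ ℝ) → Z → ℝ :=
    Sum.elim (fun f z => ∫ x, f x ∂P z) (fun f z => ∫ y, f y ∂Q z)
  have ha (i) : Integrable (a i) ξ := by
    rcases i with f | f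
    · exact integrable_integral_of_integrable_bind hP (f.integrable _)
    · exact integrable_integral_of_integrable_bind hQ (f.integrable _)
  have hmem : ∀ᵐ z ∂ξ, (fun i => a i z, b z) ∈ momentSet h c := by
    filter_upwards [hcoupling] with z ⟨γ, hγ, hcost⟩
    refine ⟨⟨γ, hγ.isProbabilityMeasure⟩, fun i => ?_, hcost⟩
    rcases i with f | f
    · exact hγ.integral_fst f.continuous.aestronglyMeasurable
    · exact hγ.integral_snd f.continuous.aestronglyMeasurable
  obtain ⟨γ, hmoments, hcost⟩ := integral_mem_momentSet hc hc₀ hcoercive ha hb hmem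
  refine ⟨γ, isCoupling_of_forall_integral_eq (fun f => ?_) (fun f => ?_), hcost⟩
  · rw [integral_bind_eq_integral_integral hP (f.integrable _)]
    exact hmoments (.inl f)
  · rw [integral_bind_eq_integral_integral hQ (f.integrable _)]
    exact hmoments (.inr f)

end BindCoupling

section SecondMoment

variable {E : Type*} [NormedAddCommGroup E] [MeasurableSpace E] {μ ν : Measure E}
  {γ : Measure (E × E)}

theorem IsCoupling.memLp_fst_sub_snd {p : ENNReal} (hγ : IsCoupling γ μ ν) (hμ : MemLp id p μ)
    (hν : MemLp id p ν) : MemLp (fun z : E × E => z.1 - z.2) p γ :=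
  (hμ.comp_measurePreserving hγ.measurePreserving_fst).sub
    (hν.comp_measurePreserving hγ.measurePreserving_snd)

variable [BorelSpace E] [SecondCountableTopology E]

theorem memLp_fst_sub_snd_two_iff :
    MemLp (fun p : E × E => p.1 - p.2) 2 γ ↔ Integrable (fun p => ‖p.1 - p.2‖ ^ 2) γ :=
  memLp_two_iff_integrable_sq_norm (by fun_prop)

theorem memLp_of_memLp_fst_sub_snd_prod [IsProbabilityMeasure μ] [IsProbabilityMeasure ν]
    (h : MemLp (fun p : E × E => p.1 - p.2) 2 (μ.prod ν)) : MemLp id 2 μ ∧ MemLp id 2 ν := by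
  rw [memLp_fst_sub_snd_two_iff] at h
  obtain ⟨y, hy⟩ := h.prod_left_ae.exists
  obtain ⟨x, hx⟩ := h.prod_right_ae.exists
  rw [← memLp_two_iff_integrable_sq_norm (by fun_prop)] at hx hy
  constructor
  · exact (hy.add (memLp_const y)).ae_eq (.of_forall fun z => sub_add_cancel z y)
  · exact ((memLp_const x).sub hx).ae_eq (.of_forall fun z => sub_sub_cancel x z)

end SecondMoment

section Wasserstein

variable {d : ℕ} {μ ν : Measure (EuclideanSpace ℝ (Fin d))}

theorem W2sq_eq_sInf_image (μ ν : Measure (EuclideanSpace ℝ (Fin d))) :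
    W2sq μ ν = sInf ((fun γ => ∫ p, ‖p.1 - p.2‖ ^ 2 ∂γ) '' {γ | IsCoupling γ μ ν}) := by
  refine congrArg sInf (Set.ext fun r => ⟨?_, ?_⟩)
  · rintro ⟨γ, hprob, hfst, hsnd, rfl⟩
    exact ⟨γ, ⟨hprob, hfst, hsnd⟩, rfl⟩
  · rintro ⟨γ, ⟨hprob, hfst, hsnd⟩, rfl⟩
    exact ⟨γ, hprob, hfst, hsnd, rfl⟩

theorem W2sq_nonneg (μ ν : Measure (EuclideanSpace ℝ (Fin d))) : 0 ≤ W2sq μ ν := by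
  rw [W2sq_eq_sInf_image]
  exact Real.sInf_nonneg <| Set.forall_mem_image.2 fun γ _ => integral_nonneg fun p => sq_nonneg _

theorem W2sq_le_integral {γ : Measure (EuclideanSpace ℝ (Fin d) × EuclideanSpace ℝ (Fin d))}
    (hγ : IsCoupling γ μ ν) : W2sq μ ν ≤ ∫ p, ‖p.1 - p.2‖ ^ 2 ∂γ := by
  rw [W2sq_eq_sInf_image]
  refine csInf_le ⟨0, Set.forall_mem_image.2 fun γ _ => ?_⟩ (Set.mem_image_of_mem _ hγ)
  exact integral_nonneg fun p => sq_nonneg _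

theorem exists_isCoupling_integral_lt [IsProbabilityMeasure μ] [IsProbabilityMeasure ν] {r : ℝ}
    (hr : W2sq μ ν < r) : ∃ γ, IsCoupling γ μ ν ∧ ∫ p, ‖p.1 - p.2‖ ^ 2 ∂γ < r := by
  have hnonempty : {γ | IsCoupling γ μ ν}.Nonempty := ⟨μ.prod ν, .prod⟩
  rw [W2sq_eq_sInf_image] at hr
  simpa only [Set.exists_mem_image] using! exists_lt_of_csInf_lt (hnonempty.image _) hr

theorem exists_isCoupling_of_W2sq_pos (h : 0 < W2sq μ ν) : ∃ γ, IsCoupling γ μ ν := by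
  by_contra! hnone
  have hempty : {γ | IsCoupling γ μ ν} = ∅ := Set.eq_empty_of_forall_notMem hnone
  refine h.ne' ?_
  rw [W2sq_eq_sInf_image, hempty, Set.image_empty, Real.sInf_empty]

-- If a second moment is infinite, the product coupling has Bochner cost `0`, so `W2sq μ ν = 0`.
theorem memLp_of_W2sq_pos (h : 0 < W2sq μ ν) : MemLp id 2 μ ∧ MemLp id 2 ν := by
  obtain ⟨γ, hγ⟩ := exists_isCoupling_of_W2sq_pos h
  have := hγ.isProbabilityMeasure_left
  have := hγ.isProbabilityMeasure_right
  refine memLp_of_memLp_fst_sub_snd_prod (memLp_fst_sub_snd_two_iff.2 ?_)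
  by_contra hnot
  exact (h.trans_le (W2sq_le_integral .prod)).ne' (integral_undef hnot)

theorem le_add_mul_W2sq [IsProbabilityMeasure μ] [IsProbabilityMeasure ν] {a k C : ℝ} (hC : 0 ≤ C)
    (h : ∀ γ, IsCoupling γ μ ν → a ≤ k + C * ∫ p, ‖p.1 - p.2‖ ^ 2 ∂γ) :
    a ≤ k + C * W2sq μ ν := by
  have hlim : Tendsto (fun ε : ℝ => k + C * (W2sq μ ν + ε)) (𝓝[>] 0) (𝓝 (k + C * W2sq μ ν)) := by
    have : Continuous fun ε : ℝ => k + C * (W2sq μ ν + ε) := by fun_prop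
    simpa using (this.tendsto 0).mono_left nhdsWithin_le_nhds
  refine ge_of_tendsto hlim ?_
  filter_upwards [self_mem_nhdsWithin] with ε hε
  obtain ⟨γ, hγ, hlt⟩ := exists_isCoupling_integral_lt (lt_add_of_pos_right (W2sq μ ν) hε)
  exact (h γ hγ).trans (by gcongr)

end Wasserstein

section NoisyStep

variable {E : Type*} [NormedAddCommGroup E] [InnerProductSpace ℝ E]

theorem integral_norm_sub_smul_sq [CompleteSpace E] {Ω : Type*} [MeasurableSpace Ω]
    {μ : Measure Ω} [IsProbabilityMeasure μ] {X : Ω → E} (hX : MemLp X 2 μ)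
    (hcentred : ∫ ω, X ω ∂μ = 0) (w : E) (β : ℝ) :
    ∫ ω, ‖w - β • X ω‖ ^ 2 ∂μ = ‖w‖ ^ 2 + β ^ 2 * ∫ ω, ‖X ω‖ ^ 2 ∂μ := by
  have hX₁ : Integrable X μ := hX.integrable one_le_two
  have hX₂ : Integrable (fun ω => ‖X ω‖ ^ 2) μ := (memLp_two_iff_integrable_sq_norm hX.1).1 hX
  have hinner : ∫ ω, ⟪w, X ω⟫ ∂μ = 0 := by rw [integral_inner hX₁, hcentred, inner_zero_right]
  have hexpand (ω : Ω) :
      ‖w - β • X ω‖ ^ 2 = ‖w‖ ^ 2 - 2 * β * ⟪w, X ω⟫ + β ^ 2 * ‖X ω‖ ^ 2 := by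
    rw [norm_sub_sq_real, inner_smul_right, norm_smul, mul_pow, norm_eq_abs, sq_abs]
    ring
  simp_rw [hexpand]
  rw [integral_add, integral_sub, integral_const_mul, integral_const_mul, hinner, integral_const]
  · simp
  · exact integrable_const _
  · exact (hX₁.const_inner w).const_mul _
  · exact (integrable_const _).sub ((hX₁.const_inner w).const_mul _)
  · exact hX₂.const_mul _

variable [MeasurableSpace E] [BorelSpace E] [SecondCountableTopology E]

theorem memLp_id_of_memLp_id_map_sub_smul {μ : Measure E} [IsFiniteMeasure μ] {p : ENNReal}
    {u : E} {β : ℝ} (hβ : β ≠ 0) (h : MemLp id p (μ.map fun e => u - β • e)) : MemLp id p μ := by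
  rw [memLp_map_measure_iff aestronglyMeasurable_id (by fun_prop)] at h
  refine (((memLp_const u).sub h).const_smul β⁻¹).ae_eq (.of_forall fun e => ?_)
  simp [smul_smul, inv_mul_cancel₀ hβ]

end NoisyStep

theorem W2sq_map_sub_smul_le {d : ℕ} {μ ν : Measure (EuclideanSpace ℝ (Fin d))}
    [IsProbabilityMeasure μ] [IsProbabilityMeasure ν] (hμ : ∫ e, e ∂μ = 0) (hν : ∫ e, e ∂ν = 0)
    {β : ℝ} (hβ : β ≠ 0) (u v : EuclideanSpace ℝ (Fin d)) :
    W2sq (μ.map fun e => u - β • e) (ν.map fun e => v - β • e) ≤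
      ‖u - v‖ ^ 2 + β ^ 2 * W2sq μ ν := by
  rcases le_or_gt (W2sq (μ.map fun e => u - β • e) (ν.map fun e => v - β • e)) 0 with hle | hpos
  · exact hle.trans (add_nonneg (sq_nonneg _) (mul_nonneg (sq_nonneg _) (W2sq_nonneg _ _)))
  have hμ₂ : MemLp id 2 μ := memLp_id_of_memLp_id_map_sub_smul hβ (memLp_of_W2sq_pos hpos).1
  have hν₂ : MemLp id 2 ν := memLp_id_of_memLp_id_map_sub_smul hβ (memLp_of_W2sq_pos hpos).2
  refine le_add_mul_W2sq (sq_nonneg β) fun γ hγ => ?_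
  have := hγ.isProbabilityMeasure
  have hcentred : ∫ p, (p.1 - p.2) ∂γ = 0 := by
    have hfst : ∫ p, p.1 ∂γ = 0 := (hγ.integral_fst (f := id) aestronglyMeasurable_id).trans hμ
    have hsnd : ∫ p, p.2 ∂γ = 0 := (hγ.integral_snd (f := id) aestronglyMeasurable_id).trans hν
    rw [integral_sub, hfst, hsnd, sub_zero]
    · exact hγ.measurePreserving_fst.integrable_comp_of_integrable (hμ₂.integrable one_le_two)
    · exact hγ.measurePreserving_snd.integrable_comp_of_integrable (hν₂.integrable one_le_two)
  calc W2sq (μ.map fun e => u - β • e) (ν.map fun e => v - β • e)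
      ≤ ∫ p, ‖p.1 - p.2‖ ^ 2 ∂γ.map (Prod.map (fun e => u - β • e) (fun e => v - β • e)) :=
        W2sq_le_integral (hγ.map (by fun_prop) (by fun_prop))
    _ = ∫ p, ‖(u - v) - β • (p.1 - p.2)‖ ^ 2 ∂γ := by
        rw [integral_map (by fun_prop) (by fun_prop)]
        refine integral_congr_ae (.of_forall fun p => ?_)
        simp only [Prod.map_fst, Prod.map_snd]
        congr 2
        module
    _ = ‖u - v‖ ^ 2 + β ^ 2 * ∫ p, ‖p.1 - p.2‖ ^ 2 ∂γ :=
        integral_norm_sub_smul_sq (hγ.memLp_fst_sub_snd hμ₂ hν₂) hcentred _ _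

/-- The squared distance `‖x - y‖²` perturbed by `δ (‖x‖² + ‖y‖²)`, which makes it coercive. -/
def perturbedCost {E : Type*} [NormedAddCommGroup E] (δ : ℝ) (p : E × E) : ℝ :=
  ‖p.1 - p.2‖ ^ 2 + δ * (‖p.1‖ ^ 2 + ‖p.2‖ ^ 2)

section PerturbedCost

variable {E : Type*} [NormedAddCommGroup E] {δ : ℝ}

theorem continuous_perturbedCost : Continuous (perturbedCost (E := E) δ) := by
  unfold perturbedCost
  fun_prop

theorem norm_sub_sq_le_perturbedCost (hδ : 0 ≤ δ) (p : E × E) :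
    ‖p.1 - p.2‖ ^ 2 ≤ perturbedCost δ p :=
  le_add_of_nonneg_right (by positivity)

theorem tendsto_perturbedCost_cocompact [ProperSpace E] (hδ : 0 < δ) :
    Tendsto (perturbedCost (E := E) δ) (cocompact (E × E)) atTop := by
  have hnorm (p : E × E) : ‖p‖ ^ 2 ≤ ‖p.1‖ ^ 2 + ‖p.2‖ ^ 2 := by
    rcases max_choice ‖p.1‖ ‖p.2‖ with h | h <;> rw [Prod.norm_def, h]
    · exact le_add_of_nonneg_right (sq_nonneg _)
    · exact le_add_of_nonneg_left (sq_nonneg _)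
  refine tendsto_atTop_mono (f := fun p => δ * ‖p‖ ^ 2) (fun p => ?_) ?_
  · exact (mul_le_mul_of_nonneg_left (hnorm p) hδ.le).trans (le_add_of_nonneg_left (sq_nonneg _))
  · exact ((tendsto_pow_atTop two_ne_zero).comp
      tendsto_norm_cocompact_atTop).const_mul_atTop hδ

variable [MeasurableSpace E] [BorelSpace E] [SecondCountableTopology E]
  {μ ν : Measure E} {γ : Measure (E × E)}

theorem IsCoupling.integrable_and_integral_perturbedCost (hγ : IsCoupling γ μ ν)
    (hμ : Integrable (fun x => ‖x‖ ^ 2) μ) (hν : Integrable (fun y => ‖y‖ ^ 2) ν) :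
    Integrable (perturbedCost δ) γ ∧ ∫ p, perturbedCost δ p ∂γ =
      ∫ p, ‖p.1 - p.2‖ ^ 2 ∂γ + δ * (∫ x, ‖x‖ ^ 2 ∂μ + ∫ y, ‖y‖ ^ 2 ∂ν) := by
  have hdist : Integrable (fun p : E × E => ‖p.1 - p.2‖ ^ 2) γ :=
    memLp_fst_sub_snd_two_iff.1 <| hγ.memLp_fst_sub_snd
      ((memLp_two_iff_integrable_sq_norm aestronglyMeasurable_id).2 hμ)
      ((memLp_two_iff_integrable_sq_norm aestronglyMeasurable_id).2 hν)
  have hfst : Integrable (fun p : E × E => ‖p.1‖ ^ 2) γ :=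
    hγ.measurePreserving_fst.integrable_comp_of_integrable hμ
  have hsnd : Integrable (fun p : E × E => ‖p.2‖ ^ 2) γ :=
    hγ.measurePreserving_snd.integrable_comp_of_integrable hν
  have hmoments : Integrable (fun p : E × E => δ * (‖p.1‖ ^ 2 + ‖p.2‖ ^ 2)) γ :=
    (hfst.add hsnd).const_mul δ
  refine ⟨hdist.add hmoments, ?_⟩
  simp only [perturbedCost]
  rw [integral_add hdist hmoments, integral_const_mul,
    integral_add hfst hsnd, hγ.integral_fst hμ.aestronglyMeasurable,
    hγ.integral_snd hν.aestronglyMeasurable]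

end PerturbedCost

section WassersteinBind

variable {d : ℕ} {Z : Type*} [MeasurableSpace Z] {ξ : Measure Z} [IsProbabilityMeasure ξ]
  {P Q : Z → Measure (EuclideanSpace ℝ (Fin d))} {b : Z → ℝ}

theorem W2sq_bind_le_integral_add (hP : AEMeasurable P ξ) (hQ : AEMeasurable Q ξ)
    (hP₁ : ∀ z, IsProbabilityMeasure (P z)) (hQ₁ : ∀ z, IsProbabilityMeasure (Q z))
    (hP₂ : Integrable (fun x => ‖x‖ ^ 2) (ξ.bind P))
    (hQ₂ : Integrable (fun x => ‖x‖ ^ 2) (ξ.bind Q))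
    (hb : Integrable b ξ) (hW : ∀ z, W2sq (P z) (Q z) ≤ b z) {δ : ℝ} (hδ : 0 < δ) :
    W2sq (ξ.bind P) (ξ.bind Q) ≤
      ∫ z, b z ∂ξ + δ * (1 + (∫ x, ‖x‖ ^ 2 ∂ξ.bind P + ∫ y, ‖y‖ ^ 2 ∂ξ.bind Q)) := by
  let moments (z : Z) : ℝ := ∫ x, ‖x‖ ^ 2 ∂P z + ∫ y, ‖y‖ ^ 2 ∂Q z
  have hPint := integrable_integral_of_integrable_bind hP hP₂
  have hQint := integrable_integral_of_integrable_bind hQ hQ₂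
  have hmoments : Integrable moments ξ := hPint.add hQint
  have hperturbation : Integrable (fun z => δ * (1 + moments z)) ξ :=
    ((integrable_const 1).add hmoments).const_mul δ
  have hcoupling : ∀ᵐ z ∂ξ, ∃ γ, IsCoupling γ (P z) (Q z) ∧ Integrable (perturbedCost δ) γ ∧
      ∫ p, perturbedCost δ p ∂γ ≤ b z + δ * (1 + moments z) := by
    filter_upwards [ae_integrable_of_integrable_bind hP hP₂,
      ae_integrable_of_integrable_bind hQ hQ₂] with z hPz hQz
    obtain ⟨γ, hγ, hlt⟩ :=
      exists_isCoupling_integral_lt ((hW z).trans_lt (lt_add_of_pos_right _ hδ))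
    obtain ⟨hint, heq⟩ := hγ.integrable_and_integral_perturbedCost (δ := δ) hPz hQz
    refine ⟨γ, hγ, hint, heq.trans_le ?_⟩
    linarith
  obtain ⟨γ, hγ, hint, hle⟩ := exists_isCoupling_bind continuous_perturbedCost
    (fun p => (sq_nonneg _).trans (norm_sub_sq_le_perturbedCost hδ.le p))
    (tendsto_perturbedCost_cocompact hδ) hP hQ (hb.add hperturbation) hcoupling
  calc W2sq (ξ.bind P) (ξ.bind Q)
      ≤ ∫ p, ‖p.1 - p.2‖ ^ 2 ∂γ := W2sq_le_integral hγ
    _ ≤ ∫ p, perturbedCost δ p ∂γ :=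
        integral_mono_of_nonneg (.of_forall fun p => sq_nonneg _) hint
          (.of_forall (norm_sub_sq_le_perturbedCost hδ.le))
    _ ≤ ∫ z, b z + δ * (1 + moments z) ∂ξ := hle
    _ = _ := by
        rw [integral_add hb hperturbation, integral_const_mul,
          integral_add (integrable_const 1) hmoments, integral_add hPint hQint,
          integral_bind_eq_integral_integral hP hP₂, integral_bind_eq_integral_integral hQ hQ₂,
          integral_const, probReal_univ, one_smul]

theorem W2sq_bind_le_integral (hP : AEMeasurable P ξ) (hQ : AEMeasurable Q ξ)
    (hP₁ : ∀ z, IsProbabilityMeasure (P z)) (hQ₁ : ∀ z, IsProbabilityMeasure (Q z))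
    (hb : Integrable b ξ) (hW : ∀ z, W2sq (P z) (Q z) ≤ b z) :
    W2sq (ξ.bind P) (ξ.bind Q) ≤ ∫ z, b z ∂ξ := by
  rcases le_or_gt (W2sq (ξ.bind P) (ξ.bind Q)) 0 with hle | hpos
  · exact hle.trans (integral_nonneg fun z => (W2sq_nonneg _ _).trans (hW z))
  obtain ⟨hP₂, hQ₂⟩ := memLp_of_W2sq_pos hpos
  rw [memLp_two_iff_integrable_sq_norm aestronglyMeasurable_id] at hP₂ hQ₂
  set M := ∫ x, ‖x‖ ^ 2 ∂ξ.bind P + ∫ y, ‖y‖ ^ 2 ∂ξ.bind Q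
  have hlim : Tendsto (fun δ : ℝ => ∫ z, b z ∂ξ + δ * (1 + M)) (𝓝[>] 0) (𝓝 (∫ z, b z ∂ξ)) := by
    have hcont : Continuous fun δ : ℝ => ∫ z, b z ∂ξ + δ * (1 + M) := by fun_prop
    simpa using (hcont.tendsto 0).mono_left nhdsWithin_le_nhds
  refine ge_of_tendsto hlim ?_
  filter_upwards [self_mem_nhdsWithin] with δ hδ
  exact W2sq_bind_le_integral_add hP hQ hP₁ hQ₁ hP₂ hQ₂ hb hW hδ

theorem W2sq_bind_le_mul_W2sq {F : EuclideanSpace ℝ (Fin d) → Measure (EuclideanSpace ℝ (Fin d))}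
    (hF : ∀ x, IsProbabilityMeasure (F x)) {C : ℝ} (hC : 0 ≤ C)
    (hW : ∀ x y, W2sq (F x) (F y) ≤ C * ‖x - y‖ ^ 2) {μ ν : Measure (EuclideanSpace ℝ (Fin d))}
    [IsProbabilityMeasure μ] [IsProbabilityMeasure ν] (hμ : MemLp id 2 μ) (hν : MemLp id 2 ν) :
    W2sq (μ.bind F) (ν.bind F) ≤ C * W2sq μ ν := by
  rcases le_or_gt (W2sq (μ.bind F) (ν.bind F)) 0 with hle | hpos
  · exact hle.trans (mul_nonneg hC (W2sq_nonneg _ _))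
  obtain ⟨_, hcoupling⟩ := exists_isCoupling_of_W2sq_pos hpos
  have hFμ : AEMeasurable F μ :=
    aemeasurable_of_bind_ne_zero hcoupling.isProbabilityMeasure_left.ne_zero
  have hFν : AEMeasurable F ν :=
    aemeasurable_of_bind_ne_zero hcoupling.isProbabilityMeasure_right.ne_zero
  rw [← zero_add (C * W2sq μ ν)]
  refine le_add_mul_W2sq hC fun γ hγ => ?_
  have := hγ.isProbabilityMeasure
  rw [zero_add, ← hγ.bind_fst hFμ, ← hγ.bind_snd hFν, ← integral_const_mul]
  exact W2sq_bind_le_integral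
    (hFμ.comp_quasiMeasurePreserving hγ.measurePreserving_fst.quasiMeasurePreserving)
    (hFν.comp_quasiMeasurePreserving hγ.measurePreserving_snd.quasiMeasurePreserving)
    (fun p => hF p.1) (fun p => hF p.2)
    ((memLp_fst_sub_snd_two_iff.1 (hγ.memLp_fst_sub_snd hμ hν)).const_mul C)
    (fun p => hW p.1 p.2)

end WassersteinBind

theorem wasserstein_contraction_general {d : ℕ}
    (Lf : EuclideanSpace ℝ (Fin d) → ℝ)
    (g : EuclideanSpace ℝ (Fin d) → EuclideanSpace ℝ (Fin d))
    (mu Lc LW : ℝ) (hLW : 0 ≤ LW)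
    (hsc : ∀ θ θ' : EuclideanSpace ℝ (Fin d),
      mu / 2 * ‖θ - θ'‖ ^ 2 ≤ Lf θ - Lf θ' - ⟪g θ', θ - θ'⟫)
    (hsm : ∀ θ θ' : EuclideanSpace ℝ (Fin d),
      Lf θ - Lf θ' - ⟪g θ', θ - θ'⟫ ≤ Lc / 2 * ‖θ - θ'‖ ^ 2)
    (η : EuclideanSpace ℝ (Fin d) → Measure (EuclideanSpace ℝ (Fin d)))
    (hηprob : ∀ x, IsProbabilityMeasure (η x))
    (hηcent : ∀ x, ∫ e, e ∂(η x) = 0)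
    (hηW : ∀ x y, W2sq (η x) (η y) ≤ LW * ‖x - y‖ ^ 2)
    (β : ℝ) (hβ0 : 0 < β) (hβ : β * (mu + Lc) ≤ 2)
    (ν₁ ν₂ : Measure (EuclideanSpace ℝ (Fin d)))
    [IsProbabilityMeasure ν₁] [IsProbabilityMeasure ν₂]
    (hm₁ : Integrable (fun x => ‖x‖ ^ 2) ν₁)
    (hm₂ : Integrable (fun x => ‖x‖ ^ 2) ν₂) :
    W2sq (sgdStep β g η ν₁) (sgdStep β g η ν₂) ≤
      ((1 - β * mu) ^ 2 + β ^ 2 * LW) * W2sq ν₁ ν₂ := by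
  have hstep (x : EuclideanSpace ℝ (Fin d)) :
      (fun e => x - β • (g x + e)) = fun e => (x - β • g x) - β • e := by
    funext e
    module
  refine W2sq_bind_le_mul_W2sq
    (fun x => Measure.isProbabilityMeasure_map (by fun_prop)) (by positivity) (fun x y => ?_)
    ((memLp_two_iff_integrable_sq_norm aestronglyMeasurable_id).2 hm₁)
    ((memLp_two_iff_integrable_sq_norm aestronglyMeasurable_id).2 hm₂)
  calc W2sq ((η x).map fun e => x - β • (g x + e)) ((η y).map fun e => y - β • (g y + e))
      ≤ ‖(x - β • g x) - (y - β • g y)‖ ^ 2 + β ^ 2 * W2sq (η x) (η y) := by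
        rw [hstep, hstep]
        exact W2sq_map_sub_smul_le (hηcent x) (hηcent y) hβ0.ne' _ _
    _ ≤ (1 - β * mu) ^ 2 * ‖x - y‖ ^ 2 + β ^ 2 * (LW * ‖x - y‖ ^ 2) := by
        gcongr
        · exact norm_gradient_step_sub_sq_le hsc hsm hβ0.le hβ x y
        · exact hηW x y
    _ = ((1 - β * mu) ^ 2 + β ^ 2 * LW) * ‖x - y‖ ^ 2 := by ring

theorem wasserstein_contraction {d : ℕ}
    (Lf : EuclideanSpace ℝ (Fin d) → ℝ)
    (g : EuclideanSpace ℝ (Fin d) → EuclideanSpace ℝ (Fin d))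
    (mu Lc LW : ℝ) (hmu : 0 < mu) (hmuLc : mu ≤ Lc) (hLW : 0 ≤ LW)
    (hsc : ∀ θ θ' : EuclideanSpace ℝ (Fin d),
      mu / 2 * ‖θ - θ'‖ ^ 2 ≤ Lf θ - Lf θ' - ⟪g θ', θ - θ'⟫)
    (hsm : ∀ θ θ' : EuclideanSpace ℝ (Fin d),
      Lf θ - Lf θ' - ⟪g θ', θ - θ'⟫ ≤ Lc / 2 * ‖θ - θ'‖ ^ 2)
    (η : EuclideanSpace ℝ (Fin d) → Measure (EuclideanSpace ℝ (Fin d)))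
    (hηprob : ∀ x, IsProbabilityMeasure (η x))
    (hηcent : ∀ x, ∫ e, e ∂(η x) = 0)
    (hηW : ∀ x y, W2sq (η x) (η y) ≤ LW * ‖x - y‖ ^ 2)
    (β : ℝ) (hβ0 : 0 < β) (hβ : β ≤ 2 / (mu + Lc))
    (ν₁ ν₂ : Measure (EuclideanSpace ℝ (Fin d)))
    [IsProbabilityMeasure ν₁] [IsProbabilityMeasure ν₂]
    (hm₁ : Integrable (fun x => ‖x‖ ^ 2) ν₁)
    (hm₂ : Integrable (fun x => ‖x‖ ^ 2) ν₂) :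
    W2sq (sgdStep β g η ν₁) (sgdStep β g η ν₂) ≤
      ((1 - β * mu) ^ 2 + β ^ 2 * LW) * W2sq ν₁ ν₂ := by
  exact wasserstein_contraction_general Lf g mu Lc LW hLW hsc hsm η hηprob hηcent hηW β hβ0
    ((le_div_iff₀ (by linarith)).1 hβ) ν₁ ν₂ hm₁ hm₂
end

section
/- Let (θ_t) be the SGD chain with linear gradient ∇L(θ) = Σ(θ − θ*) (Σ symmetric positive definite with spectrum in [μ, L]), step size β ≤ 2/(μ+L) satisfying the Wasserstein contraction with constant α_W = √((1−βμ)² + β²L_W) < 1, initialized at θ₀ ∼ ν ∈ P₂(ℝ^d), and let π be the invariant measure. Then for all 0 ≤ i ≤ j, E⟨θ_i − θ*, θ_j − θ*⟩ ≤ 2(1−βμ)^{j−i}·( α_W^{2i}·W₂²(ν, π) + Var_π(θ) ), where Var_π(θ) = E_{θ∼π}‖θ − θ*‖². -/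
open MeasureTheory Real
open scoped RealInnerProductSpace

/-!
Centred at `θ*`, the chain satisfies `E[X (t + 1) | ℱ t] = T (X t)` with `T = 1 - β Σ`, because the
noise is conditionally centred. As `T` is linear it commutes with conditional expectations, so the
tower property gives `E[X j | ℱ i] = T ^ (j - i) (X i)`, and hence
`E⟪X i, X j⟫ = E⟪X i, T ^ (j - i) (X i)⟫ ≤ ‖T‖ ^ (j - i) * E‖X i‖²`. The operator `T` is symmetric
and its Rayleigh quotient lies between `-(1 - β μ)` and `1 - β μ`, so `‖T‖ ≤ 1 - β μ`. Finally,
`‖x‖² ≤ 2 (‖x - y‖² + ‖y‖²)`, integrated against a coupling of the law of `θ i` with `π`, bounds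
`E‖X i‖²` by `2 (W₂² + Var π)`.
-/

section OperatorNorm

theorem norm_pow_apply_le {𝕜 V : Type*} [NontriviallyNormedField 𝕜] [SeminormedAddCommGroup V]
    [NormedSpace 𝕜 V] (T : V →L[𝕜] V) (k : ℕ) (x : V) : ‖(T ^ k) x‖ ≤ ‖T‖ ^ k * ‖x‖ := by
  cases k with
  | zero => simp
  | succ k => exact (T ^ (k + 1)).le_of_opNorm_le (norm_pow_le' T k.succ_pos) x

theorem opNorm_le_of_abs_reApplyInnerSelf_le {𝕜 F : Type*} [RCLike 𝕜] [NormedAddCommGroup F]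
    [InnerProductSpace 𝕜 F] {T : F →L[𝕜] F} (hT : T.IsSymmetric) {c : ℝ} (hc : 0 ≤ c)
    (h : ∀ x, |T.reApplyInnerSelf x| ≤ c * ‖x‖ ^ 2) : ‖T‖ ≤ c := by
  rw [T.norm_eq_iSup_rayleighQuotient hT]
  refine ciSup_le fun x => ?_
  rw [abs_div, abs_of_nonneg (sq_nonneg ‖x‖)]
  exact div_le_of_le_mul₀ (sq_nonneg _) hc (h x)

theorem one_sub_mul_nonneg_of_mul_add_le_two {m L β : ℝ} (hmL : m ≤ L) (hβ : 0 ≤ β)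
    (hβL : β * (m + L) ≤ 2) : 0 ≤ 1 - β * m := by
  nlinarith

theorem opNorm_one_sub_smul_le {E : Type*} [NormedAddCommGroup E] [InnerProductSpace ℝ E]
    {S : E →L[ℝ] E} (hS : S.IsSymmetric) {m L β : ℝ}
    (hm : ∀ x, m * ‖x‖ ^ 2 ≤ ⟪x, S x⟫) (hL : ∀ x, ⟪x, S x⟫ ≤ L * ‖x‖ ^ 2)
    (hmL : m ≤ L) (hβ : 0 ≤ β) (hβL : β * (m + L) ≤ 2) :
    ‖1 - β • S‖ ≤ 1 - β * m := by
  have hsym : (1 - β • S).IsSymmetric :=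
    LinearMap.IsSymmetric.one.sub (hS.smul (conj_trivial β))
  refine opNorm_le_of_abs_reApplyInnerSelf_le hsym
    (one_sub_mul_nonneg_of_mul_add_le_two hmL hβ hβL) fun x => ?_
  have hform : (1 - β • S).reApplyInnerSelf x = ‖x‖ ^ 2 - β * ⟪x, S x⟫ := by
    simp [ContinuousLinearMap.reApplyInnerSelf_apply, inner_sub_left, real_inner_smul_left,
      real_inner_comm x (S x)]
  have hlower : β * (m * ‖x‖ ^ 2) ≤ β * ⟪x, S x⟫ := by gcongr; exact hm x
  have hupper : β * ⟪x, S x⟫ ≤ β * (L * ‖x‖ ^ 2) := by gcongr; exact hL x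
  have hstep : β * (m + L) * ‖x‖ ^ 2 ≤ 2 * ‖x‖ ^ 2 := by gcongr
  rw [hform, abs_le]
  constructor <;> linarith

end OperatorNorm

section SecondMoments

variable {Ω E : Type*} {m m₀ : MeasurableSpace Ω} {P : Measure Ω} [NormedAddCommGroup E]

theorem integral_sq_norm_le_two_mul_integral_sq_norm_sub_add {f g : Ω → E}
    (hf : MemLp f 2 P) (hg : MemLp g 2 P) :
    ∫ ω, ‖f ω‖ ^ 2 ∂P ≤ 2 * (∫ ω, ‖f ω - g ω‖ ^ 2 ∂P + ∫ ω, ‖g ω‖ ^ 2 ∂P) := by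
  have hfg_sq : Integrable (fun ω => ‖f ω - g ω‖ ^ 2) P :=
    (hf.sub hg).integrable_norm_pow two_ne_zero
  have hg_sq : Integrable (fun ω => ‖g ω‖ ^ 2) P := hg.integrable_norm_pow two_ne_zero
  rw [← integral_add hfg_sq hg_sq, ← integral_const_mul]
  refine integral_mono (hf.integrable_norm_pow two_ne_zero)
    ((hfg_sq.add hg_sq).const_mul 2) fun ω => ?_
  calc ‖f ω‖ ^ 2 ≤ (‖f ω - g ω‖ + ‖g ω‖) ^ 2 := by gcongr; exact norm_le_norm_sub_add _ _
    _ ≤ 2 * (‖f ω - g ω‖ ^ 2 + ‖g ω‖ ^ 2) := add_sq_le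

theorem integrable_inner_of_memLp_two {𝕜 : Type*} [RCLike 𝕜] [InnerProductSpace 𝕜 E]
    {f g : Ω → E} (hf : MemLp f 2 P) (hg : MemLp g 2 P) :
    Integrable (fun ω => inner 𝕜 (f ω) (g ω)) P :=
  (hf.norm.integrable_mul hg.norm).mono' (hf.1.inner hg.1)
    (ae_of_all _ fun ω => norm_inner_le_norm (f ω) (g ω))

variable [InnerProductSpace ℝ E]

theorem integral_inner_condExp [CompleteSpace E] [IsFiniteMeasure P] (hm : m ≤ m₀) {f g : Ω → E}
    (hfm : StronglyMeasurable[m] f) (hf : MemLp f 2 P) (hg : MemLp g 2 P) :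
    ∫ ω, ⟪f ω, P[g | m] ω⟫ ∂P = ∫ ω, ⟪f ω, g ω⟫ ∂P := by
  rw [← integral_condExp hm (f := fun ω => ⟪f ω, g ω⟫)]
  exact integral_congr_ae (condExp_bilin_of_stronglyMeasurable_left (innerSL ℝ) hfm
    (integrable_inner_of_memLp_two hf hg) (hg.integrable one_le_two)).symm

theorem condExp_eq_zero_of_forall_condExp_inner_eq_zero [CompleteSpace E]
    [SecondCountableTopology E] {f : Ω → E} (hf : Integrable f P)
    (h : ∀ u : E, P[fun ω => ⟪u, f ω⟫ | m] =ᵐ[P] 0) : P[f | m] =ᵐ[P] 0 :=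
  ae_eq_zero_of_forall_inner (𝕜 := ℝ) fun u => ((innerSL ℝ u).comp_condExp_comm hf).trans (h u)

end SecondMoments

section LinearDrift

variable {Ω E : Type*} {m₀ : MeasurableSpace Ω} {P : Measure Ω} [IsFiniteMeasure P]
  {ℱ : Filtration ℕ m₀} [NormedAddCommGroup E] [CompleteSpace E] {X : ℕ → Ω → E}

theorem condExp_add_eq_pow_of_condExp_succ_eq [NormedSpace ℝ E] {T : E →L[ℝ] E}
    (hX : StronglyAdapted ℱ X) (hint : ∀ t, Integrable (X t) P)
    (hdrift : ∀ t, P[X (t + 1) | ℱ t] =ᵐ[P] T ∘ X t) (i k : ℕ) :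
    P[X (i + k) | ℱ i] =ᵐ[P] ⇑(T ^ k) ∘ X i := by
  induction k with
  | zero => simp [condExp_of_stronglyMeasurable (ℱ.le i) (hX i) (hint i)]
  | succ k ih =>
    calc P[X (i + k + 1) | ℱ i]
        =ᵐ[P] P[P[X (i + k + 1) | ℱ (i + k)] | ℱ i] :=
          (condExp_condExp_of_le (ℱ.mono (Nat.le_add_right i k)) (ℱ.le _)).symm
      _ =ᵐ[P] P[T ∘ X (i + k) | ℱ i] := condExp_congr_ae (hdrift (i + k))
      _ =ᵐ[P] T ∘ P[X (i + k) | ℱ i] := (T.comp_condExp_comm (hint (i + k))).symm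
      _ =ᵐ[P] T ∘ ⇑(T ^ k) ∘ X i := ih.fun_comp T
      _ = ⇑(T ^ (k + 1)) ∘ X i := by rw [pow_succ']; rfl

theorem integral_inner_le_opNorm_pow_mul_of_condExp_succ_eq [InnerProductSpace ℝ E]
    {T : E →L[ℝ] E} (hX : StronglyAdapted ℱ X) (hL2 : ∀ t, MemLp (X t) 2 P)
    (hdrift : ∀ t, P[X (t + 1) | ℱ t] =ᵐ[P] T ∘ X t) {i j : ℕ} (hij : i ≤ j) :
    ∫ ω, ⟪X i ω, X j ω⟫ ∂P ≤ ‖T‖ ^ (j - i) * ∫ ω, ‖X i ω‖ ^ 2 ∂P := by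
  obtain ⟨k, rfl⟩ := Nat.exists_eq_add_of_le hij
  have hcond := condExp_add_eq_pow_of_condExp_succ_eq hX
    (fun t => (hL2 t).integrable one_le_two) hdrift i k
  rw [Nat.add_sub_cancel_left, ← integral_const_mul]
  calc ∫ ω, ⟪X i ω, X (i + k) ω⟫ ∂P
      = ∫ ω, ⟪X i ω, P[X (i + k) | ℱ i] ω⟫ ∂P :=
        (integral_inner_condExp (ℱ.le i) (hX i) (hL2 i) (hL2 (i + k))).symm
    _ = ∫ ω, ⟪X i ω, (T ^ k) (X i ω)⟫ ∂P :=
        integral_congr_ae (hcond.mono fun ω hω => congrArg (inner ℝ (X i ω)) hω)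
    _ ≤ ∫ ω, ‖T‖ ^ k * ‖X i ω‖ ^ 2 ∂P := by
        refine integral_mono
          (integrable_inner_of_memLp_two (hL2 i) ((T ^ k).comp_memLp' (hL2 i)))
          (((hL2 i).integrable_norm_pow two_ne_zero).const_mul _) fun ω => ?_
        calc ⟪X i ω, (T ^ k) (X i ω)⟫ ≤ ‖X i ω‖ * ‖(T ^ k) (X i ω)‖ := real_inner_le_norm _ _
          _ ≤ ‖X i ω‖ * (‖T‖ ^ k * ‖X i ω‖) := by
            gcongr
            exact norm_pow_apply_le T k (X i ω)
          _ = ‖T‖ ^ k * ‖X i ω‖ ^ 2 := by ring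

end LinearDrift

section LinearSGD

variable {Ω E : Type*} {m₀ : MeasurableSpace Ω} {P : Measure Ω} [IsFiniteMeasure P]
  {ℱ : Filtration ℕ m₀} [NormedAddCommGroup E] [InnerProductSpace ℝ E] [CompleteSpace E]
  [SecondCountableTopology E] {S : E →L[ℝ] E} {β : ℝ} {θ ε : ℕ → Ω → E} {θstar : E}

theorem condExp_sgd_succ_sub (hθ : StronglyAdapted ℱ θ)
    (hint : ∀ t, Integrable (fun ω => θ t ω - θstar) P)
    (hrec : ∀ t ω, θ (t + 1) ω = θ t ω - β • (S (θ t ω - θstar) + ε t ω))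
    (hcent : ∀ t, ∀ u : E, P[fun ω => ⟪u, ε t ω⟫ | ℱ t] =ᵐ[P] 0) (t : ℕ) :
    P[fun ω => θ (t + 1) ω - θstar | ℱ t] =ᵐ[P] ⇑(1 - β • S) ∘ fun ω => θ t ω - θstar := by
  set drift : Ω → E := ⇑(1 - β • S) ∘ fun ω => θ t ω - θstar with hdrift
  have hstep : (fun ω => θ (t + 1) ω - θstar) = drift - β • ε t := by
    ext1 ω
    simp only [hdrift, hrec, Pi.sub_apply, Pi.smul_apply, Function.comp_apply, smul_add,
      sub_apply, one_apply_eq_self, smul_apply]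
    abel
  have hdrift_int : Integrable drift P := (1 - β • S).integrable_comp (hint t)
  have hdrift_meas : StronglyMeasurable[ℱ t] drift :=
    (1 - β • S).continuous.comp_stronglyMeasurable ((hθ t).sub stronglyMeasurable_const)
  have hnoise_int : Integrable (β • ε t) P := by
    have hsub := hdrift_int.sub (hint (t + 1))
    rwa [hstep, sub_sub_cancel] at hsub
  have hnoise : P[β • ε t | ℱ t] =ᵐ[P] 0 := by
    refine condExp_eq_zero_of_forall_condExp_inner_eq_zero hnoise_int fun u => ?_
    have hpull : (fun ω => ⟪u, (β • ε t) ω⟫) = β • fun ω => ⟪u, ε t ω⟫ :=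
      funext fun ω => real_inner_smul_right u (ε t ω) β
    rw [hpull]
    filter_upwards [condExp_smul β (fun ω => ⟪u, ε t ω⟫) (ℱ t), hcent t u] with ω hsmul hzero
    rw [hsmul, Pi.smul_apply, hzero, Pi.zero_apply, smul_zero]
  rw [hstep]
  filter_upwards [condExp_sub hdrift_int hnoise_int (ℱ t), hnoise] with ω hsub hzero
  rw [hsub, Pi.sub_apply, hzero, Pi.zero_apply, sub_zero,
    condExp_of_stronglyMeasurable (ℱ.le t) hdrift_meas hdrift_int]

theorem integral_inner_sgd_le (hS : S.IsSymmetric) {m L : ℝ}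
    (hm : ∀ x, m * ‖x‖ ^ 2 ≤ ⟪x, S x⟫) (hL : ∀ x, ⟪x, S x⟫ ≤ L * ‖x‖ ^ 2)
    (hmL : m ≤ L) (hβ : 0 ≤ β) (hβL : β * (m + L) ≤ 2)
    (hθ : StronglyAdapted ℱ θ) (hL2 : ∀ t, MemLp (fun ω => θ t ω - θstar) 2 P)
    (hrec : ∀ t ω, θ (t + 1) ω = θ t ω - β • (S (θ t ω - θstar) + ε t ω))
    (hcent : ∀ t, ∀ u : E, P[fun ω => ⟪u, ε t ω⟫ | ℱ t] =ᵐ[P] 0) {i j : ℕ} (hij : i ≤ j) :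
    ∫ ω, ⟪θ i ω - θstar, θ j ω - θstar⟫ ∂P ≤
      (1 - β * m) ^ (j - i) * ∫ ω, ‖θ i ω - θstar‖ ^ 2 ∂P :=
  calc ∫ ω, ⟪θ i ω - θstar, θ j ω - θstar⟫ ∂P
      ≤ ‖1 - β • S‖ ^ (j - i) * ∫ ω, ‖θ i ω - θstar‖ ^ 2 ∂P :=
        integral_inner_le_opNorm_pow_mul_of_condExp_succ_eq
          (X := fun t ω => θ t ω - θstar)
          (fun t => (hθ t).sub stronglyMeasurable_const) hL2
          (condExp_sgd_succ_sub hθ (fun t => (hL2 t).integrable one_le_two) hrec hcent) hij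
    _ ≤ (1 - β * m) ^ (j - i) * ∫ ω, ‖θ i ω - θstar‖ ^ 2 ∂P := by
        gcongr
        exact opNorm_one_sub_smul_le hS hm hL hmL hβ hβL

end LinearSGD

theorem integral_sq_norm_sub_le_two_mul_W2sq_add {d : ℕ}
    {μ ν : Measure (EuclideanSpace ℝ (Fin d))} [IsProbabilityMeasure μ] [IsProbabilityMeasure ν]
    {a : EuclideanSpace ℝ (Fin d)} (hμ : MemLp (fun x => x - a) 2 μ)
    (hν : MemLp (fun x => x - a) 2 ν) :
    ∫ x, ‖x - a‖ ^ 2 ∂μ ≤ 2 * (W2sq μ ν + ∫ x, ‖x - a‖ ^ 2 ∂ν) := by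
  suffices hcost : (∫ x, ‖x - a‖ ^ 2 ∂μ) / 2 - ∫ x, ‖x - a‖ ^ 2 ∂ν ≤ W2sq μ ν by linarith
  refine le_csInf ⟨_, μ.prod ν, inferInstance, by simp, by simp, rfl⟩ ?_
  rintro _ ⟨ξ, -, rfl, rfl, rfl⟩
  have hcoupling := integral_sq_norm_le_two_mul_integral_sq_norm_sub_add
    (hμ.comp_of_map (by fun_prop)) (hν.comp_of_map (by fun_prop))
  simp only [Function.comp_apply, sub_sub_sub_cancel_right] at hcoupling
  rw [integral_map (by fun_prop) (by fun_prop), integral_map (by fun_prop) (by fun_prop)]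
  linarith

theorem natural_eq_comap_fin {Ω β : Type*} {m₀ : MeasurableSpace Ω} [TopologicalSpace β]
    [TopologicalSpace.MetrizableSpace β] [MeasurableSpace β] [BorelSpace β] {u : ℕ → Ω → β}
    (hu : ∀ t, StronglyMeasurable (u t)) (t : ℕ) :
    Filtration.natural u hu t =
      MeasurableSpace.comap (fun ω => fun s : Fin (t + 1) => u s ω) inferInstance := by
  rw [MeasurableSpace.comap_process_pi fun s : Fin (t + 1) => u s]
  refine le_antisymm (iSup₂_le fun s hs => ?_) (iSup_le fun s => ?_)
  · exact le_iSup (fun r : Fin (t + 1) => MeasurableSpace.comap (u r) _) ⟨s, Nat.lt_succ_of_le hs⟩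
  · exact le_iSup₂_of_le (s : ℕ) (Nat.le_of_lt_succ s.is_lt) le_rfl

theorem geometric_covariance_decay_general {d : ℕ} {Ω : Type*} {m₀ : MeasurableSpace Ω}
    {P : Measure Ω} [IsProbabilityMeasure P] {ℱ : Filtration ℕ m₀}
    {S : EuclideanSpace ℝ (Fin d) →L[ℝ] EuclideanSpace ℝ (Fin d)} (hS : S.IsSymmetric)
    {m L β α : ℝ} (hm : ∀ x, m * ‖x‖ ^ 2 ≤ ⟪x, S x⟫) (hL : ∀ x, ⟪x, S x⟫ ≤ L * ‖x‖ ^ 2)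
    (hmL : m ≤ L) (hβ : 0 ≤ β) (hβL : β * (m + L) ≤ 2)
    {θ ε : ℕ → Ω → EuclideanSpace ℝ (Fin d)} {θstar : EuclideanSpace ℝ (Fin d)}
    (hθ : StronglyAdapted ℱ θ) (hL2 : ∀ t, MemLp (fun ω => θ t ω - θstar) 2 P)
    (hrec : ∀ t ω, θ (t + 1) ω = θ t ω - β • (S (θ t ω - θstar) + ε t ω))
    (hcent : ∀ t, ∀ u, P[fun ω => ⟪u, ε t ω⟫ | ℱ t] =ᵐ[P] 0)
    {ν : Measure (EuclideanSpace ℝ (Fin d))} [IsProbabilityMeasure ν]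
    (hν : MemLp (fun x => x - θstar) 2 ν)
    (hW : ∀ i, W2sq (P.map (θ i)) ν ≤ α ^ (2 * i) * W2sq (P.map (θ 0)) ν)
    {i j : ℕ} (hij : i ≤ j) :
    ∫ ω, ⟪θ i ω - θstar, θ j ω - θstar⟫ ∂P ≤
      2 * (1 - β * m) ^ (j - i) *
        (α ^ (2 * i) * W2sq (P.map (θ 0)) ν + ∫ x, ‖x - θstar‖ ^ 2 ∂ν) := by
  have hθi : Measurable (θ i) := ((hθ i).mono (ℱ.le i)).measurable
  have := Measure.isProbabilityMeasure_map (μ := P) hθi.aemeasurable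
  have hcontract : 0 ≤ 1 - β * m := one_sub_mul_nonneg_of_mul_add_le_two hmL hβ hβL
  have hlaw : ∫ ω, ‖θ i ω - θstar‖ ^ 2 ∂P = ∫ x, ‖x - θstar‖ ^ 2 ∂P.map (θ i) := by
    rw [integral_map hθi.aemeasurable (by fun_prop)]
  have hlawL2 : MemLp (fun x => x - θstar) 2 (P.map (θ i)) :=
    (memLp_map_measure_iff (by fun_prop) hθi.aemeasurable).2 (hL2 i)
  calc ∫ ω, ⟪θ i ω - θstar, θ j ω - θstar⟫ ∂P
      ≤ (1 - β * m) ^ (j - i) * ∫ ω, ‖θ i ω - θstar‖ ^ 2 ∂P :=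
        integral_inner_sgd_le hS hm hL hmL hβ hβL hθ hL2 hrec hcent hij
    _ ≤ (1 - β * m) ^ (j - i) * (2 * (W2sq (P.map (θ i)) ν + ∫ x, ‖x - θstar‖ ^ 2 ∂ν)) := by
        rw [hlaw]
        gcongr
        exact integral_sq_norm_sub_le_two_mul_W2sq_add hlawL2 hν
    _ ≤ (1 - β * m) ^ (j - i) *
          (2 * (α ^ (2 * i) * W2sq (P.map (θ 0)) ν + ∫ x, ‖x - θstar‖ ^ 2 ∂ν)) := by
        gcongr
        exact hW i
    _ = _ := by ring

theorem geometric_covariance_decay {d : ℕ} {Ω : Type*} [MeasurableSpace Ω]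
    (P : Measure Ω) [IsProbabilityMeasure P]
    (Sl : EuclideanSpace ℝ (Fin d) →ₗ[ℝ] EuclideanSpace ℝ (Fin d))
    (mu Lc LW β : ℝ) (θstar : EuclideanSpace ℝ (Fin d))
    (hmu : 0 < mu) (hmuLc : mu ≤ Lc) (hLW : 0 ≤ LW)
    -- Σ symmetric with spectrum in [μ, L]
    (hsym : ∀ x y, ⟪Sl x, y⟫ = ⟪x, Sl y⟫)
    (hspec₁ : ∀ x, mu * ‖x‖ ^ 2 ≤ ⟪x, Sl x⟫)
    (hspec₂ : ∀ x, ⟪x, Sl x⟫ ≤ Lc * ‖x‖ ^ 2)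
    (hβ0 : 0 < β) (hβ : β ≤ 2 / (mu + Lc))
    (hαW : Real.sqrt ((1 - β * mu) ^ 2 + β ^ 2 * LW) < 1)
    (θ ε : ℕ → Ω → EuclideanSpace ℝ (Fin d))
    (hθmeas : ∀ t, Measurable (θ t)) (hεmeas : ∀ t, Measurable (ε t))
    -- SGD recursion with linear gradient ∇L(x) = Σ(x − θ*)
    (hrec : ∀ t ω, θ (t + 1) ω = θ t ω - β • (Sl (θ t ω - θstar) + ε t ω))
    -- noise conditionally centered given the past trajectory
    (hcent : ∀ t, ∀ u : EuclideanSpace ℝ (Fin d),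
      P[fun ω => ⟪u, ε t ω⟫ |
        MeasurableSpace.comap (fun ω => fun s : Fin (t + 1) => θ s ω) inferInstance]
        =ᵐ[P] 0)
    (πβ : Measure (EuclideanSpace ℝ (Fin d))) [IsProbabilityMeasure πβ]
    -- Wasserstein contraction of the marginals towards the invariant measure
    (hW : ∀ i : ℕ, W2sq (Measure.map (θ i) P) πβ ≤
      (Real.sqrt ((1 - β * mu) ^ 2 + β ^ 2 * LW)) ^ (2 * i) *
        W2sq (Measure.map (θ 0) P) πβ)
    (hmom : ∀ t, Integrable (fun ω => ‖θ t ω - θstar‖ ^ 2) P)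
    (hπmom : Integrable (fun x => ‖x - θstar‖ ^ 2) πβ) :
    ∀ i j : ℕ, i ≤ j →
      ∫ ω, ⟪θ i ω - θstar, θ j ω - θstar⟫ ∂P ≤
        2 * (1 - β * mu) ^ (j - i) *
          ((Real.sqrt ((1 - β * mu) ^ 2 + β ^ 2 * LW)) ^ (2 * i) *
              W2sq (Measure.map (θ 0) P) πβ +
            ∫ x, ‖x - θstar‖ ^ 2 ∂πβ) := by
  have hθstrong t : StronglyMeasurable (θ t) := (hθmeas t).stronglyMeasurable
  have hL2 t : MemLp (fun ω => θ t ω - θstar) 2 P :=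
    (memLp_two_iff_integrable_sq_norm (by fun_prop)).2 (hmom t)
  exact fun i j hij => geometric_covariance_decay_general (S := Sl.toContinuousLinearMap) hsym
    hspec₁ hspec₂ hmuLc hβ0.le ((le_div_iff₀ (by linarith)).1 hβ)
    (Filtration.stronglyAdapted_natural hθstrong) hL2 hrec
    (by simpa only [natural_eq_comap_fin] using hcent)
    ((memLp_two_iff_integrable_sq_norm (by fun_prop)).2 hπmom) hW hij
end
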